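/- Distance of a fixed point from Q (key estimate in the proof of Theorem 2.3): Set γ := ‖Q‖_{(d+1)/2,ℤ^k} and δ := ‖Q‖_{d+1,ℤ^k∖{0}}, assumed finite. If x ∈ D is any fixed point of T, then ‖x − Q‖_{d+1,ℤ^k∖{0}} ≤ (δ² + γ) · ‖x‖_{d+1,ℤ^k∖{0}}^d; in particular |‖x‖_{d+1,ℤ^k∖{0}} − δ| ≤ (δ² + γ) ‖x‖_{d+1,ℤ^k∖{0}}^d. -/

import Mathlib

/-!
Write `A = ∑ Q(j) x(j)^d` and `C(i) = ∑ Q(i - j) x(j)^d`. The fixed point equation reads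
`x(i) (1 + A) = Q(i) + C(i)`, so `x - Q = (C - A Q) / (1 + A)` and `|x - Q| ≤ C + A Q` pointwise.
By Minkowski, `‖x - Q‖ ≤ ‖C‖ + A δ` in `ℓ^{d+1}`. Hölder's inequality (`holder_real`) gives
`A ≤ δ ‖x‖^d`, and Young's convolution inequality with exponents `(d+1)/2` and `(d+1)/d`
(`young_real`) gives `‖C‖ ≤ γ ‖x‖^d`. The second estimate is the reverse triangle inequality.

Hölder and Young are proved for `ENNReal`-valued sequences, where convergence is no issue, and then
transferred to the reals. Writing `Q = (√Q)²` makes every exponent a natural number.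
-/

open scoped BigOperators
open Filter Topology

noncomputable section

/-- The integer lattice `ℤ^k`. -/
abbrev ZkL (k : ℕ) := Fin k → ℤ

/-- The punctured integer lattice `ℤ^k ∖ {0}`, as a subtype. -/
abbrev ZkP (k : ℕ) := {j : ZkL k // j ≠ 0}

/-- The `p`-norm `‖x‖_{p, ℤ^k}` of a function on all of `ℤ^k`. -/
noncomputable def normFull (k : ℕ) (p : ℝ) (x : ZkL k → ℝ) : ℝ :=
  (∑' j : ZkL k, |x j| ^ p) ^ (1 / p)

/-- The `p`-norm `‖x‖_{p, ℤ^k ∖ {0}}` of a function on `ℤ^k`, restricted to nonzero sites. -/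
noncomputable def normPunct (k : ℕ) (p : ℝ) (x : ZkL k → ℝ) : ℝ :=
  (∑' j : ZkP k, |x j.1| ^ p) ^ (1 / p)

/-- The `p`-norm of a function defined on `ℤ^k ∖ {0}`. -/
noncomputable def norm0 (k : ℕ) (p : ℝ) (x : ZkP k → ℝ) : ℝ :=
  (∑' j : ZkP k, |x j| ^ p) ^ (1 / p)

/-- `γ := ‖Q‖_{(d+1)/2, ℤ^k}`. -/
noncomputable def gam (k d : ℕ) (Q : ZkL k → ℝ) : ℝ := normFull k (((d : ℝ) + 1) / 2) Q

/-- `δ := ‖Q‖_{d+1, ℤ^k ∖ {0}}`. -/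
noncomputable def del (k d : ℕ) (Q : ZkL k → ℝ) : ℝ := normPunct k ((d : ℝ) + 1) Q

/-- Membership in `D`: an element of `ℓ^{d+1}(ℤ^k ∖ {0})` with nonnegative entries. -/
def memD (k d : ℕ) (x : ZkP k → ℝ) : Prop :=
  Summable (fun j : ZkP k => |x j| ^ ((d : ℝ) + 1)) ∧ ∀ j : ZkP k, 0 ≤ x j

/-- The operator `T`:
`T(x)(i) = (Q(i) + Σ_{j≠0} Q(i−j) x(j)^d) / (1 + Σ_{j≠0} Q(j) x(j)^d)`. -/
noncomputable def opT (k d : ℕ) (Q : ZkL k → ℝ) (x : ZkP k → ℝ) (i : ZkL k) : ℝ :=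
  (Q i + ∑' j : ZkP k, Q (i - j.1) * x j ^ d) /
  (1 + ∑' j : ZkP k, Q j.1 * x j ^ d)

/-- The good set `G_d`. -/
def goodSet (d : ℕ) : Set (ℝ × ℝ) :=
  {gd | 1 < gd.1 ∧ 0 < gd.2 ∧ ∃ ε > 0,
    gd.2 + gd.1 * ε ^ d ≤ ε ∧
    2 * d * gd.1 * ε ^ (d - 1) + 2 * d * gd.2 * ε ^ d < 1}

/-- Generalized Hölder inequality for `n + 1` sequences, all in `ℓ^{n+1}`. -/
lemma holder_tsum {J : Type*} (n : ℕ) (f : Fin (n + 1) → J → ENNReal) :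
    (∑' j, ∏ i, f i j) ^ (n + 1) ≤ ∏ i, ∑' j, f i j ^ (n + 1) := by
  let _ : MeasurableSpace J := ⊤
  have hn : ((n : ℝ) + 1) ≠ 0 := by positivity
  have h := ENNReal.lintegral_prod_norm_pow_le (μ := MeasureTheory.Measure.count)
    (Finset.univ : Finset (Fin (n + 1))) (f := fun i j => f i j ^ (n + 1))
    (fun i _ => Measurable.aemeasurable (fun _ _ => trivial)) (p := fun _ => 1 / ((n : ℝ) + 1))
    (by simp; field_simp) (fun i _ => by positivity)
  simp only [MeasureTheory.lintegral_count] at h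
  have e : ∀ z : ENNReal, (z ^ (n + 1)) ^ (1 / ((n : ℝ) + 1)) = z := fun z => by
    rw [← ENNReal.rpow_natCast, ← ENNReal.rpow_mul]
    push_cast
    rw [mul_one_div_cancel hn, ENNReal.rpow_one]
  have e' : ∀ z : ENNReal, (z ^ (1 / ((n : ℝ) + 1))) ^ (n + 1) = z := fun z => by
    rw [← ENNReal.rpow_natCast, ← ENNReal.rpow_mul]
    push_cast
    rw [one_div_mul_cancel hn, ENNReal.rpow_one]
  simp only [e] at h
  calc _ ≤ _ := pow_le_pow_left' h (n + 1)
    _ = _ := by rw [← Finset.prod_pow]; simp only [e']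

lemma holder_two {J : Type*} (n : ℕ) (a c : J → ENNReal) :
    (∑' j, a j * c j ^ n) ^ (n + 1) ≤ (∑' j, a j ^ (n + 1)) * (∑' j, c j ^ (n + 1)) ^ n := by
  simpa [Fin.prod_univ_succ] using holder_tsum n (Fin.cons a fun _ => c)

lemma holder_three {J : Type*} (m : ℕ) (a b c : J → ENNReal) :
    (∑' j, a j * (b j * c j ^ m)) ^ (m + 2) ≤
      (∑' j, a j ^ (m + 2)) * ((∑' j, b j ^ (m + 2)) * (∑' j, c j ^ (m + 2)) ^ m) := by
  simpa [Fin.prod_univ_succ] using holder_tsum (m + 1) (Fin.cons a (Fin.cons b fun _ => c))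

/-- Young's convolution inequality for `s² ∈ ℓ^{(m+2)/2}` and `c^{m+1} ∈ ℓ^{(m+2)/(m+1)}`, with
target `ℓ^{m+2}`; all quantities are written as powers of `s` and `c`, so that only natural
exponents occur. The summand is split as `(s c) · s · c^m` before applying Hölder. -/
lemma young_tsum {J G : Type*} [AddCommGroup G] (e : J → G) (he : Function.Injective e) (m : ℕ)
    (s : G → ENNReal) (c : J → ENNReal) :
    ∑' i, (∑' j, s (e i - e j) ^ 2 * c j ^ (m + 1)) ^ (m + 2) ≤
      (∑' l, s l ^ (m + 2)) ^ 2 * (∑' j, c j ^ (m + 2)) ^ (m + 1) := by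
  set S := ∑' l, s l ^ (m + 2)
  set X := ∑' j, c j ^ (m + 2)
  have h1 : ∀ i, (∑' j, s (e i - e j) ^ 2 * c j ^ (m + 1)) ^ (m + 2) ≤
      (∑' j, s (e i - e j) ^ (m + 2) * c j ^ (m + 2)) * (S * X ^ m) := fun i => by
    calc _ = (∑' j, (s (e i - e j) * c j) * (s (e i - e j) * c j ^ m)) ^ (m + 2) := by
          congr 1; exact tsum_congr fun j => by ring
      _ ≤ _ := holder_three m _ _ _
      _ ≤ _ := by
          simp only [mul_pow]
          gcongr
          exact ENNReal.tsum_comp_le_tsum_of_injective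
            (f := fun j => e i - e j) (fun a b h => he (by simpa using h)) (fun l => s l ^ (m + 2))
  calc _ ≤ ∑' i, (∑' j, s (e i - e j) ^ (m + 2) * c j ^ (m + 2)) * (S * X ^ m) :=
        ENNReal.tsum_le_tsum h1
    _ = (∑' j, ∑' i, s (e i - e j) ^ (m + 2) * c j ^ (m + 2)) * (S * X ^ m) := by
        rw [ENNReal.tsum_mul_right, ENNReal.tsum_comm]
    _ ≤ (∑' j, S * c j ^ (m + 2)) * (S * X ^ m) := by
        gcongr with j
        rw [ENNReal.tsum_mul_right]
        gcongr
        exact ENNReal.tsum_comp_le_tsum_of_injective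
            (f := fun i => e i - e j) (fun a b h => he (by simpa using h)) (fun l => s l ^ (m + 2))
    _ = _ := by rw [ENNReal.tsum_mul_left]; ring

/-- No summability is needed: a divergent real `tsum` is `0`. -/
lemma ofReal_tsum_le {J : Type*} (f : J → ℝ) (hf : ∀ j, 0 ≤ f j) :
    ENNReal.ofReal (∑' j, f j) ≤ ∑' j, ENNReal.ofReal (f j) := by
  by_cases h : Summable f
  · rw [ENNReal.ofReal_tsum_of_nonneg hf h]
  · simp [tsum_eq_zero_of_not_summable h]

lemma holder_real {J : Type*} (n : ℕ) (a c : J → ℝ) (ha : ∀ j, 0 ≤ a j) (hc : ∀ j, 0 ≤ c j)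
    (sa : Summable fun j => a j ^ (n + 1)) (sc : Summable fun j => c j ^ (n + 1)) :
    (∑' j, a j * c j ^ n) ^ (n + 1) ≤ (∑' j, a j ^ (n + 1)) * (∑' j, c j ^ (n + 1)) ^ n := by
  have na : ∀ j, 0 ≤ a j ^ (n + 1) := fun j => pow_nonneg (ha j) _
  have nc : ∀ j, 0 ≤ c j ^ (n + 1) := fun j => pow_nonneg (hc j) _
  have nac : ∀ j, 0 ≤ a j * c j ^ n := fun j => mul_nonneg (ha j) (pow_nonneg (hc j) _)
  have hA : 0 ≤ ∑' j, a j ^ (n + 1) := tsum_nonneg na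
  have hC : 0 ≤ ∑' j, c j ^ (n + 1) := tsum_nonneg nc
  rw [← ENNReal.ofReal_le_ofReal_iff (by positivity), ENNReal.ofReal_mul hA,
    ENNReal.ofReal_pow hC, ENNReal.ofReal_pow (tsum_nonneg nac),
    ENNReal.ofReal_tsum_of_nonneg na sa, ENNReal.ofReal_tsum_of_nonneg nc sc]
  calc _ ≤ _ := pow_le_pow_left' (ofReal_tsum_le _ nac) _
    _ = (∑' j, ENNReal.ofReal (a j) * ENNReal.ofReal (c j) ^ n) ^ (n + 1) := by
        congr 1
        exact tsum_congr fun j => by rw [ENNReal.ofReal_mul (ha j), ENNReal.ofReal_pow (hc j)]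
    _ ≤ _ := holder_two n _ _
    _ = _ := by simp only [ENNReal.ofReal_pow (ha _), ENNReal.ofReal_pow (hc _)]

lemma young_real {J G : Type*} [AddCommGroup G] (e : J → G) (he : Function.Injective e) (m : ℕ)
    (s : G → ℝ) (c : J → ℝ) (hs : ∀ j, 0 ≤ s j) (hc : ∀ j, 0 ≤ c j)
    (ss : Summable fun j => s j ^ (m + 2)) (sc : Summable fun j => c j ^ (m + 2)) :
    (Summable fun i => (∑' j, s (e i - e j) ^ 2 * c j ^ (m + 1)) ^ (m + 2)) ∧
    ∑' i, (∑' j, s (e i - e j) ^ 2 * c j ^ (m + 1)) ^ (m + 2) ≤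
      (∑' l, s l ^ (m + 2)) ^ 2 * (∑' j, c j ^ (m + 2)) ^ (m + 1) := by
  have ns : ∀ j, 0 ≤ s j ^ (m + 2) := fun j => pow_nonneg (hs j) _
  have nc : ∀ j, 0 ≤ c j ^ (m + 2) := fun j => pow_nonneg (hc j) _
  have nsc : ∀ i j, 0 ≤ s (e i - e j) ^ 2 * c j ^ (m + 1) := fun i j =>
    mul_nonneg (pow_nonneg (hs _) _) (pow_nonneg (hc j) _)
  have nC : ∀ i, 0 ≤ (∑' j, s (e i - e j) ^ 2 * c j ^ (m + 1)) ^ (m + 2) := fun i =>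
    pow_nonneg (tsum_nonneg (nsc i)) _
  have hS : 0 ≤ ∑' j, s j ^ (m + 2) := tsum_nonneg ns
  have hC : 0 ≤ ∑' j, c j ^ (m + 2) := tsum_nonneg nc
  have key : ∑' i, ENNReal.ofReal ((∑' j, s (e i - e j) ^ 2 * c j ^ (m + 1)) ^ (m + 2)) ≤
      ENNReal.ofReal ((∑' l, s l ^ (m + 2)) ^ 2 * (∑' j, c j ^ (m + 2)) ^ (m + 1)) := by
    rw [ENNReal.ofReal_mul (by positivity), ENNReal.ofReal_pow hC, ENNReal.ofReal_pow hS,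
      ENNReal.ofReal_tsum_of_nonneg ns ss, ENNReal.ofReal_tsum_of_nonneg nc sc]
    calc _ ≤ ∑' i, (∑' j, ENNReal.ofReal (s (e i - e j)) ^ 2 *
              ENNReal.ofReal (c j) ^ (m + 1)) ^ (m + 2) := by
          refine ENNReal.tsum_le_tsum fun i => ?_
          rw [ENNReal.ofReal_pow (tsum_nonneg (nsc i))]
          refine pow_le_pow_left' ((ofReal_tsum_le _ (nsc i)).trans_eq ?_) _
          exact tsum_congr fun j => by
            rw [ENNReal.ofReal_mul (pow_nonneg (hs _) _), ENNReal.ofReal_pow (hc j),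
              ENNReal.ofReal_pow (hs _)]
      _ ≤ _ := young_tsum e he m (fun l => ENNReal.ofReal (s l)) _
      _ = _ := by simp only [ENNReal.ofReal_pow (hs _), ENNReal.ofReal_pow (hc _)]
  have hsum : Summable fun i => (∑' j, s (e i - e j) ^ 2 * c j ^ (m + 1)) ^ (m + 2) := by
    have := ENNReal.summable_toReal (ne_top_of_le_ne_top ENNReal.ofReal_ne_top key)
    simpa only [ENNReal.toReal_ofReal (nC _)] using this
  refine ⟨hsum, ?_⟩
  rw [← ENNReal.ofReal_le_ofReal_iff (by positivity), ENNReal.ofReal_tsum_of_nonneg nC hsum]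
  exact key

lemma norm0_nonneg (k : ℕ) (p : ℝ) (f : ZkP k → ℝ) : 0 ≤ norm0 k p f :=
  Real.rpow_nonneg (tsum_nonneg fun _ => Real.rpow_nonneg (abs_nonneg _) _) _

lemma norm0_pow (k d : ℕ) (f : ZkP k → ℝ) (hf : ∀ j, 0 ≤ f j) :
    norm0 k ((d : ℝ) + 1) f ^ (d + 1) = ∑' j, f j ^ (d + 1) := by
  have hd : ((d : ℝ) + 1) ≠ 0 := by positivity
  have e : ∀ j, |f j| ^ ((d : ℝ) + 1) = f j ^ (d + 1) := fun j => by
    rw [abs_of_nonneg (hf j)]; exact_mod_cast Real.rpow_natCast (f j) (d + 1)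
  simp only [norm0, e]
  rw [← Real.rpow_natCast, ← Real.rpow_mul (tsum_nonneg fun j => pow_nonneg (hf j) _)]
  push_cast
  rw [one_div_mul_cancel hd, Real.rpow_one]

lemma gam_pow (k d : ℕ) (Q : ZkL k → ℝ) (hQ : ∀ j, 0 < Q j) :
    gam k d Q ^ (d + 1) = (∑' l, √(Q l) ^ (d + 1)) ^ 2 := by
  have hd : ((d : ℝ) + 1) ≠ 0 := by positivity
  have e : ∀ l, |Q l| ^ (((d : ℝ) + 1) / 2) = √(Q l) ^ (d + 1) := fun l => by
    rw [abs_of_nonneg (hQ l).le, Real.sqrt_eq_rpow, ← Real.rpow_natCast, ← Real.rpow_mul (hQ l).le]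
    push_cast; congr 1; ring
  simp only [gam, normFull, e]
  rw [← Real.rpow_natCast, ← Real.rpow_mul (tsum_nonneg fun j => by positivity),
    ← Real.rpow_natCast]
  congr 1; push_cast; field_simp

/-- Minkowski's inequality combined with monotonicity of the norm. -/
lemma norm0_le_add (k : ℕ) (p : ℝ) (hp : 1 ≤ p) (h f g : ZkP k → ℝ)
    (hle : ∀ j, |h j| ≤ |f j| + |g j|)
    (sf : Summable fun j => |f j| ^ p) (sg : Summable fun j => |g j| ^ p) :
    (Summable fun j => |h j| ^ p) ∧ norm0 k p h ≤ norm0 k p f + norm0 k p g := by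
  have p0 : 0 ≤ p := by linarith
  obtain ⟨s, hM⟩ := Real.Lp_add_le_tsum_of_nonneg hp (fun j => abs_nonneg (f j))
    (fun j => abs_nonneg (g j)) sf sg
  have hpt : ∀ j, |h j| ^ p ≤ (|f j| + |g j|) ^ p := fun j =>
    Real.rpow_le_rpow (abs_nonneg _) (hle j) p0
  have sh : Summable fun j => |h j| ^ p :=
    s.of_nonneg_of_le (fun j => Real.rpow_nonneg (abs_nonneg _) _) hpt
  refine ⟨sh, le_trans ?_ hM⟩
  exact Real.rpow_le_rpow (tsum_nonneg fun j => Real.rpow_nonneg (abs_nonneg _) _)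
    (sh.tsum_le_tsum hpt s) (by positivity)

/-- key estimate in the proof of Theorem 2.3: distance of a fixed point
from `Q`. If `x ∈ D` is a fixed point of `T`, then
`‖x − Q‖_{d+1,ℤ^k∖{0}} ≤ (δ² + γ)‖x‖_{d+1,ℤ^k∖{0}}^d`; in particular
`|‖x‖_{d+1,ℤ^k∖{0}} − δ| ≤ (δ² + γ)‖x‖_{d+1,ℤ^k∖{0}}^d`. -/
theorem stmt7 (k d : ℕ) (hk : 1 ≤ k) (hd : 2 ≤ d)
    (Q : ZkL k → ℝ) (hQpos : ∀ j, 0 < Q j) (hQ0 : Q 0 = 1)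
    (hsum1 : Summable fun j : ZkL k => |Q j| ^ (((d : ℝ) + 1) / 2))
    (hsum2 : Summable fun j : ZkP k => |Q j.1| ^ ((d : ℝ) + 1))
    (x : ZkP k → ℝ) (hx : memD k d x)
    (hfix : ∀ i : ZkP k, opT k d Q x i.1 = x i) :
    norm0 k ((d : ℝ) + 1) (fun i : ZkP k => x i - Q i.1) ≤
      (del k d Q ^ 2 + gam k d Q) * norm0 k ((d : ℝ) + 1) x ^ d ∧
    |norm0 k ((d : ℝ) + 1) x - del k d Q| ≤
      (del k d Q ^ 2 + gam k d Q) * norm0 k ((d : ℝ) + 1) x ^ d := by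
  obtain ⟨m, rfl⟩ : ∃ m, d = m + 1 := ⟨d - 1, by omega⟩
  obtain ⟨sx, x0⟩ := hx
  set p : ℝ := ((m + 1 : ℕ) : ℝ) + 1 with hpdef
  have hp : 1 ≤ p := by rw [hpdef]; linarith [Nat.cast_nonneg (α := ℝ) (m + 1)]
  have epow : ∀ z : ℝ, 0 ≤ z → |z| ^ p = z ^ (m + 2) := fun z hz => by
    rw [abs_of_nonneg hz, hpdef]; exact_mod_cast Real.rpow_natCast z (m + 2)
  have q0 : ∀ j, 0 ≤ Q j := fun j => (hQpos j).le
  have sx' : Summable fun j => x j ^ (m + 2) := by simpa only [epow _ (x0 _)] using sx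
  have sq' : Summable fun j : ZkP k => Q j.1 ^ (m + 2) := by
    simpa only [epow _ (q0 _)] using hsum2
  have ss : Summable fun l => √(Q l) ^ (m + 2) := by
    refine hsum1.congr fun l => ?_
    rw [abs_of_nonneg (q0 l), Real.sqrt_eq_rpow, ← Real.rpow_natCast, ← Real.rpow_mul (q0 l), hpdef]
    congr 1; push_cast; ring
  set A := ∑' j : ZkP k, Q j.1 * x j ^ (m + 1) with hA
  set C : ZkP k → ℝ := fun i => ∑' j : ZkP k, Q (i.1 - j.1) * x j ^ (m + 1) with hC
  set N := norm0 k p x with hN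
  have hdel : del k (m + 1) Q = norm0 k p (fun j => Q j.1) := rfl
  set δ := del k (m + 1) Q
  have hgam := gam_pow k (m + 1) Q hQpos
  have g0 : 0 ≤ gam k (m + 1) Q :=
    Real.rpow_nonneg (tsum_nonneg fun _ => Real.rpow_nonneg (abs_nonneg _) _) _
  set γ := gam k (m + 1) Q
  have N0 : 0 ≤ N := norm0_nonneg _ _ _
  have δ0 : 0 ≤ δ := norm0_nonneg k p _
  have A0 : 0 ≤ A := tsum_nonneg fun j => mul_nonneg (q0 _) (pow_nonneg (x0 j) _)
  have C0 : ∀ i, 0 ≤ C i := fun i =>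
    tsum_nonneg fun j => mul_nonneg (q0 _) (pow_nonneg (x0 j) _)
  have hNpow : N ^ (m + 2) = ∑' j, x j ^ (m + 2) := norm0_pow k (m + 1) x x0
  have hδpow : δ ^ (m + 2) = ∑' j : ZkP k, Q j.1 ^ (m + 2) :=
    norm0_pow k (m + 1) (fun j => Q j.1) fun j => q0 j.1
  have hA_le : A ≤ δ * N ^ (m + 1) := by
    refine le_of_pow_le_pow_left₀ (n := m + 2) (by omega) (by positivity) ?_
    refine (holder_real (m + 1) (fun j : ZkP k => Q j.1) x (fun j => q0 _) x0 sq' sx').trans_eq ?_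
    rw [← hNpow, ← hδpow]; ring
  have hCs : ∀ i, C i = ∑' j : ZkP k, √(Q (i.1 - j.1)) ^ 2 * x j ^ (m + 1) := fun i =>
    tsum_congr fun j => by rw [Real.sq_sqrt (q0 _)]
  obtain ⟨sC, hCle⟩ := young_real (fun i : ZkP k => i.1) Subtype.val_injective m
    (fun l => √(Q l)) x (fun l => Real.sqrt_nonneg _) x0 ss sx'
  simp only [← hCs] at sC hCle
  have hC_le : norm0 k p C ≤ γ * N ^ (m + 1) := by
    refine le_of_pow_le_pow_left₀ (n := m + 2) (by omega) (by positivity) ?_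
    rw [norm0_pow k (m + 1) C C0]
    refine hCle.trans_eq ?_
    rw [← hNpow, mul_pow, hgam]; ring
  have hAQ : norm0 k p (fun j => A * Q j.1) = A * δ := by
    refine (pow_left_inj₀ (norm0_nonneg _ _ _) (mul_nonneg A0 δ0) (n := m + 2) (by omega)).1 ?_
    rw [norm0_pow k (m + 1) _ fun j => mul_nonneg A0 (q0 _), mul_pow, hδpow, ← tsum_mul_left]
    exact tsum_congr fun j => mul_pow _ _ _
  have hdiff : ∀ i, |x i - Q i.1| ≤ |C i| + |A * Q i.1| := fun i => by
    have h1 : (0 : ℝ) < 1 + A := by linarith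
    have h2 : (Q i.1 + C i) / (1 + A) = x i := hfix i
    rw [div_eq_iff h1.ne'] at h2
    -- `x i - Q i = (C i - A * Q i) / (1 + A)`, and the denominator is at least `1`.
    have h3 : |x i - Q i.1| * (1 + A) = |C i - A * Q i.1| := by
      rw [← abs_of_pos h1, ← abs_mul]; congr 1; linarith
    have h4 := abs_sub (C i) (A * Q i.1)
    nlinarith [abs_nonneg (x i - Q i.1), mul_nonneg (abs_nonneg (x i - Q i.1)) A0]
  have sC' : Summable fun j => |C j| ^ p := by simpa only [epow _ (C0 _)] using sC
  have sAQ : Summable fun j : ZkP k => |A * Q j.1| ^ p := by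
    simp only [epow _ (mul_nonneg A0 (q0 _)), mul_pow]
    exact sq'.mul_left _
  obtain ⟨sD, hD⟩ := norm0_le_add k p hp (fun i => x i - Q i.1) C _ hdiff sC' sAQ
  have main : norm0 k p (fun i => x i - Q i.1) ≤ (δ ^ 2 + γ) * N ^ (m + 1) := by
    rw [hAQ] at hD
    nlinarith [mul_le_mul_of_nonneg_right hA_le δ0]
  refine ⟨main, le_trans ?_ main⟩
  have t1 := (norm0_le_add k p hp x (fun i => x i - Q i.1) (fun j => Q j.1)
    (fun j => by simpa using abs_add_le (x j - Q j.1) (Q j.1)) sD hsum2).2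
  have t2 := (norm0_le_add k p hp (fun j => Q j.1) (fun i => x i - Q i.1) x
    (fun j => by
      have := abs_sub (x j) (x j - Q j.1)
      rw [sub_sub_cancel] at this; linarith) sD sx).2
  rw [abs_sub_le_iff, hdel]
  constructor <;> linarith
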